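/- Let {e₁,e₂,e₃} be the standard orthonormal basis of V = ℝ³ and suppose (K,S) is in Z₂-canonical form with parameters (λ,μ,a,b,c,d), where either λ > 0, μ > 0 and λ ≠ μ, or λ = μ > 0 and (b−c)² + (b+c−2a−2d)² ≠ 0, or λ = 0, μ > 0 and d ≠ 0, or μ = 0, λ > 0 and (b−c)² + d² ≠ 0. Then the stabilizer of (K,S) in SO(3) is exactly the order-2 subgroup {id, P₁} generated by the rotation P₁ by angle π about e₁. -/

import Mathlib

/-!
The tensor equation `K(w,w) = 2λw` and the eigenvalue equation `Sw = aw` hold for `w = e₁`, hence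
also for the unit vector `w = g e₁ = (x,y,z)` whenever `g` stabilizes `(K,S)`. Solving both for unit vectors
(`axis_eq`) shows `g e₁ = e₁`, or, when `λ = 0`, `g e₁ = ±e₁`: the other unit solutions of the
first equation, namely `x = -1/2` with `(y,z)` on a diagonal (present only for `λ = μ`) and
`±e₂, ±e₃` (present only for `λ = 0`), are excluded by the assumptions on `S`.

So `g` acts on the plane `e₁^⊥` by an orthogonal `2 × 2` block of known determinant. Comparing
coordinates in `K(ge₁,ge₂) = g K(e₁,e₂)` and `S(ge₂) = g S e₂` forces this block to be `±1`
(`block_eq`); this is also where `g e₁ = -e₁` is excluded. Conversely `id` and `P₁` visibly preserve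
the canonical form.
-/

/-!
Setting (affine hypersurfaces admitting a pointwise symmetry, algebraic part):
`V₃ = ℝ³` with its standard inner product `h = ⟪·,·⟫`.  `K` is a symmetric bilinear
map `V₃ × V₃ → V₃` whose cubic form `h(K(X,Y),Z)` is totally symmetric and which
satisfies the apolarity condition (`K_X` trace-free), `S` is an `h`-symmetric
endomorphism.  `stab K S` is the stabilizer of the pair `(K,S)` inside `SO(3)`.
-/

noncomputable section

open scoped RealInnerProductSpace

/-- The 3-dimensional Euclidean space `ℝ³` with its standard inner product. -/
abbrev V₃ := EuclideanSpace ℝ (Fin 3)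

/-- A symmetric bilinear map `K` is admissible (a difference tensor) if the cubic form
`(X,Y,Z) ↦ ⟪K X Y, Z⟫` is totally symmetric and `K_X := K X ·` is trace-free for all `X`. -/
def IsAdmissibleK (K : V₃ →ₗ[ℝ] V₃ →ₗ[ℝ] V₃) : Prop :=
  (∀ X Y, K X Y = K Y X) ∧
  (∀ X Y Z, ⟪K X Y, Z⟫ = ⟪K X Z, Y⟫) ∧
  (∀ X, LinearMap.trace ℝ V₃ (K X) = 0)

/-- `S` is a symmetric endomorphism with respect to the inner product. -/
def IsSymmEndo (S : V₃ →ₗ[ℝ] V₃) : Prop := ∀ X Y, ⟪S X, Y⟫ = ⟪X, S Y⟫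

/-- The stabilizer of the pair `(K,S)` inside `SO(3)`: all orientation-preserving
(i.e. determinant `1`) linear isometries `g` of `ℝ³` with `K(gX,gY) = g(K(X,Y))`
and `S(gX) = g(SX)` for all `X, Y`. -/
def stab (K : V₃ →ₗ[ℝ] V₃ →ₗ[ℝ] V₃) (S : V₃ →ₗ[ℝ] V₃) : Set (V₃ ≃ₗᵢ[ℝ] V₃) :=
  {g | LinearMap.det (g.toLinearEquiv : V₃ →ₗ[ℝ] V₃) = 1 ∧
    (∀ X Y, K (g X) (g Y) = g (K X Y)) ∧ (∀ X, S (g X) = g (S X))}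

/-- The matrix of `g` with respect to the orthonormal basis `e`: column `j` consists of
the coordinates of `g (e j)` in the basis `e`. -/
def matrixOf (e : OrthonormalBasis (Fin 3) ℝ V₃) (g : V₃ ≃ₗᵢ[ℝ] V₃) :
    Matrix (Fin 3) (Fin 3) ℝ :=
  Matrix.of fun i j => ⟪e i, g (e j)⟫

/-- The standard orthonormal basis `{e₁, e₂, e₃}` of `ℝ³`. -/
def stdB : OrthonormalBasis (Fin 3) ℝ V₃ := EuclideanSpace.basisFun (Fin 3) ℝ

/-- Matrix of the rotation by angle `θ` about the first basis vector `e₁`. -/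
def rotMat (θ : ℝ) : Matrix (Fin 3) (Fin 3) ℝ :=
  !![1, 0, 0; 0, Real.cos θ, -Real.sin θ; 0, Real.sin θ, Real.cos θ]

/-- Matrix of the rotation by angle `π` about the axis `cos (θ/2) e₂ + sin (θ/2) e₃`
in the plane orthogonal to `e₁`. -/
def flipMat (θ : ℝ) : Matrix (Fin 3) (Fin 3) ℝ :=
  !![-1, 0, 0; 0, Real.cos θ, Real.sin θ; 0, Real.sin θ, -Real.cos θ]

/-- The set of all rotations about the axis `e 0` (the first vector of the basis `e`). -/
def rotSet (e : OrthonormalBasis (Fin 3) ℝ V₃) : Set (V₃ ≃ₗᵢ[ℝ] V₃) :=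
  {g | ∃ θ : ℝ, matrixOf e g = rotMat θ}

/-- The set of all rotations by angle `π` about axes orthogonal to `e 0`. -/
def flipSet (e : OrthonormalBasis (Fin 3) ℝ V₃) : Set (V₃ ≃ₗᵢ[ℝ] V₃) :=
  {g | ∃ θ : ℝ, matrixOf e g = flipMat θ}

/-- The whole of `SO(3)`, as a set of linear isometries of `ℝ³`. -/
def so3Set : Set (V₃ ≃ₗᵢ[ℝ] V₃) :=
  {g | LinearMap.det (g.toLinearEquiv : V₃ →ₗ[ℝ] V₃) = 1}

/-- Matrix of `P₁`, the rotation by angle `π` about `e₁`. -/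
def P1mat : Matrix (Fin 3) (Fin 3) ℝ := !![1, 0, 0; 0, -1, 0; 0, 0, -1]

/-- Matrix of `P₂`, the rotation by angle `π` about `e₂`. -/
def P2mat : Matrix (Fin 3) (Fin 3) ℝ := !![-1, 0, 0; 0, 1, 0; 0, 0, -1]

/-- Matrix of `P₃`, the rotation by angle `π` about `e₃`. -/
def P3mat : Matrix (Fin 3) (Fin 3) ℝ := !![-1, 0, 0; 0, -1, 0; 0, 0, 1]

/-- Matrix of `R₁`, the rotation by angle `2π/3` about `e₁`. -/
def R1mat : Matrix (Fin 3) (Fin 3) ℝ :=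
  !![1, 0, 0; 0, -(1/2), -(Real.sqrt 3/2); 0, Real.sqrt 3/2, -(1/2)]

/-- Matrix of `R₃`, the rotation by angle `2π/3` about `e₃`. -/
def R3mat : Matrix (Fin 3) (Fin 3) ℝ :=
  !![-(1/2), -(Real.sqrt 3/2), 0; Real.sqrt 3/2, -(1/2), 0; 0, 0, 1]

/-- Matrix of `Q`, the rotation by angle `2π/3` about the axis `e₁ + e₂ + e₃`
(the cyclic permutation `e₁ ↦ e₂ ↦ e₃ ↦ e₁`). -/
def Qmat : Matrix (Fin 3) (Fin 3) ℝ := !![0, 0, 1; 1, 0, 0; 0, 1, 0]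

/-- The matrices of the Klein four-group `{id, P₁, P₂, P₃} ≅ Z₂ × Z₂`. -/
def kleinMatSet : Set (Matrix (Fin 3) (Fin 3) ℝ) := {1, P1mat, P2mat, P3mat}

/-- The matrices of the order-6 group `⟨P₁, R₃⟩ ≅ S₃`. -/
def s3MatSet : Set (Matrix (Fin 3) (Fin 3) ℝ) :=
  {1, R3mat, R3mat * R3mat, P1mat, P1mat * R3mat, R3mat * P1mat}

/-- The matrices of the order-12 group `⟨P₁, P₂, Q⟩ ≅ A₄`. -/
def a4MatSet : Set (Matrix (Fin 3) (Fin 3) ℝ) :=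
  {1, P1mat, P2mat, P3mat, Qmat, Qmat * Qmat,
   P1mat * Qmat, P2mat * Qmat, P3mat * Qmat,
   Qmat * Qmat * P1mat, Qmat * Qmat * P2mat, Qmat * Qmat * P3mat}

/-- The matrices of the order-3 group `{id, R₁, R₁²} ≅ Z₃`. -/
def z3MatSet : Set (Matrix (Fin 3) (Fin 3) ℝ) := {1, R1mat, R1mat * R1mat}

/-- The matrices of the order-2 group `{id, P₁} ≅ Z₂`. -/
def z2MatSet : Set (Matrix (Fin 3) (Fin 3) ℝ) := {1, P1mat}

/-- The pair `(K,S)` is in `Z₂`-canonical form with parameters `(lam, mu, a, b, c, d)`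
with respect to the orthonormal basis `e`. -/
def Z2Form (K : V₃ →ₗ[ℝ] V₃ →ₗ[ℝ] V₃) (S : V₃ →ₗ[ℝ] V₃)
    (e : OrthonormalBasis (Fin 3) ℝ V₃) (lam mu a b c d : ℝ) : Prop :=
  K (e 0) (e 0) = (2*lam) • e 0 ∧
  K (e 0) (e 1) = (-lam) • e 1 + mu • e 2 ∧
  K (e 0) (e 2) = mu • e 1 + (-lam) • e 2 ∧
  K (e 1) (e 1) = (-lam) • e 0 ∧
  K (e 1) (e 2) = mu • e 0 ∧
  K (e 2) (e 2) = (-lam) • e 0 ∧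
  S (e 0) = a • e 0 ∧ S (e 1) = b • e 1 + d • e 2 ∧ S (e 2) = d • e 1 + c • e 2

/-- The pair `(K,S)` is in `Z₃`-canonical form with parameters `(lam, mu, a, b)`
with respect to the orthonormal basis `e`. -/
def Z3Form (K : V₃ →ₗ[ℝ] V₃ →ₗ[ℝ] V₃) (S : V₃ →ₗ[ℝ] V₃)
    (e : OrthonormalBasis (Fin 3) ℝ V₃) (lam mu a b : ℝ) : Prop :=
  K (e 0) (e 0) = (2*lam) • e 0 ∧
  K (e 0) (e 1) = (-lam) • e 1 ∧
  K (e 0) (e 2) = (-lam) • e 2 ∧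
  K (e 1) (e 1) = (-lam) • e 0 + mu • e 1 ∧
  K (e 1) (e 2) = (-mu) • e 2 ∧
  K (e 2) (e 2) = (-lam) • e 0 + (-mu) • e 1 ∧
  S (e 0) = a • e 0 ∧ S (e 1) = b • e 1 ∧ S (e 2) = b • e 2

/-- The pair `(K,S)` is in `SO(2)`-canonical form with parameters `(lam, a, b)`
with respect to the orthonormal basis `e`. -/
def SO2Form (K : V₃ →ₗ[ℝ] V₃ →ₗ[ℝ] V₃) (S : V₃ →ₗ[ℝ] V₃)
    (e : OrthonormalBasis (Fin 3) ℝ V₃) (lam a b : ℝ) : Prop :=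
  K (e 0) (e 0) = (2*lam) • e 0 ∧
  K (e 0) (e 1) = (-lam) • e 1 ∧
  K (e 0) (e 2) = (-lam) • e 2 ∧
  K (e 1) (e 1) = (-lam) • e 0 ∧
  K (e 1) (e 2) = 0 ∧
  K (e 2) (e 2) = (-lam) • e 0 ∧
  S (e 0) = a • e 0 ∧ S (e 1) = b • e 1 ∧ S (e 2) = b • e 2

/-- The pair `(K,S)` is in orthogonal-triple canonical form with parameters `(lam, a, b, c)`
with respect to the orthonormal basis `e`. -/
def OTForm (K : V₃ →ₗ[ℝ] V₃ →ₗ[ℝ] V₃) (S : V₃ →ₗ[ℝ] V₃)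
    (e : OrthonormalBasis (Fin 3) ℝ V₃) (lam a b c : ℝ) : Prop :=
  K (e 0) (e 0) = 0 ∧ K (e 1) (e 1) = 0 ∧ K (e 2) (e 2) = 0 ∧
  K (e 0) (e 1) = lam • e 2 ∧
  K (e 0) (e 2) = lam • e 1 ∧
  K (e 1) (e 2) = lam • e 0 ∧
  S (e 0) = a • e 0 ∧ S (e 1) = b • e 1 ∧ S (e 2) = c • e 2

/-- The pair `(K,S)` is in `S₃`-canonical form with parameters `(lam, a, b)`
with respect to the orthonormal basis `e`. -/
def S3Form (K : V₃ →ₗ[ℝ] V₃ →ₗ[ℝ] V₃) (S : V₃ →ₗ[ℝ] V₃)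
    (e : OrthonormalBasis (Fin 3) ℝ V₃) (lam a b : ℝ) : Prop :=
  K (e 0) (e 0) = lam • e 0 ∧
  K (e 0) (e 1) = (-lam) • e 1 ∧
  K (e 1) (e 1) = (-lam) • e 0 ∧
  K (e 0) (e 2) = 0 ∧ K (e 1) (e 2) = 0 ∧ K (e 2) (e 2) = 0 ∧
  S (e 0) = a • e 0 ∧ S (e 1) = a • e 1 ∧ S (e 2) = b • e 2

/-- The four nondegeneracy conditions of the theorem. -/
def Nondeg (lam mu a b c d : ℝ) : Prop :=
  (0 < lam ∧ 0 < mu ∧ lam ≠ mu) ∨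
  (lam = mu ∧ 0 < lam ∧ (b - c)^2 + (b + c - 2*a - 2*d)^2 ≠ 0) ∨
  (lam = 0 ∧ 0 < mu ∧ d ≠ 0) ∨
  (mu = 0 ∧ 0 < lam ∧ (b - c)^2 + d^2 ≠ 0)

lemma pm_one {x : ℝ} (h : x^2 = 1) : x = 1 ∨ x = -1 := by
  simpa using sq_eq_sq_iff_eq_or_eq_neg.1 (h.trans (one_pow 2).symm)

/-- The unit vectors `w = (x,y,z)` with `K(w,w) = 2λw` and `Sw = aw` lie on the axis `ℝe₁`, and
`w = e₁` unless `λ = 0`. Here `k₀, k₁, k₂` and `s₁, s₂` are the coordinates of the two equations. -/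
lemma axis_eq {lam mu a b c d x y z : ℝ} (hcond : Nondeg lam mu a b c d)
    (hu : x^2 + y^2 + z^2 = 1)
    (k₀ : 2*lam*x^2 - lam*(y^2 + z^2) + 2*mu*(y*z) = 2*lam*x)
    (k₁ : 2*x*(-lam*y + mu*z) = 2*lam*y)
    (k₂ : 2*x*(mu*y - lam*z) = 2*lam*z)
    (s₁ : b*y + d*z = a*y) (s₂ : d*y + c*z = a*z) :
    y = 0 ∧ z = 0 ∧ (x = 1 ∨ (lam = 0 ∧ x = -1)) := by
  -- In the diagonal coordinates `y ± z` the equations `k₁, k₂` decouple.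
  have hs : (x*(mu - lam) - lam) * (y + z) = 0 := by linarith
  have ht : (x*(mu + lam) + lam) * (y - z) = 0 := by linarith
  have finish : 0 < lam → y + z = 0 → y - z = 0 →
      y = 0 ∧ z = 0 ∧ (x = 1 ∨ (lam = 0 ∧ x = -1)) := by
    intro hl h1 h2
    have hy : y = 0 := by linarith
    have hz : z = 0 := by linarith
    subst hy hz
    refine ⟨rfl, rfl, Or.inl ?_⟩
    have : lam * (1 - x) = 0 := by linear_combination (1/2)*k₀ - lam*hu
    rcases mul_eq_zero.1 this with h | h <;> linarith
  -- Off the axis but on a diagonal, `x` is a root of `2x³ - 3x² + 1 = (x-1)²(2x+1)`.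
  have plus : 0 < lam → 0 ≤ mu → y + z ≠ 0 → y - z ≠ 0 := by
    intro hl hm h h2
    have hx := (mul_eq_zero.1 hs).resolve_right h
    have hzy : z = y := by linarith
    subst hzy
    have : lam * ((x - 1)^2 * (2*x + 1)) = 0 := by
      linear_combination x*k₀ + (mu - lam)*x*(-hu) + (x^2 - 1)*(hx)
    rcases mul_eq_zero.1 ((mul_eq_zero.1 this).resolve_left hl.ne') with h3 | h3
    · have hx1 : x = 1 := by nlinarith
      subst hx1
      exact h (by nlinarith)
    · have hx1 : x = -1/2 := by linarith
      subst hx1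
      linarith
  have minus : 0 < lam → y + z = 0 → y - z ≠ 0 → x = -1/2 ∧ mu = lam := by
    intro hl h2 h
    have hx := (mul_eq_zero.1 ht).resolve_right h
    have hzy : z = -y := by linarith
    subst hzy
    have : lam * ((x - 1)^2 * (2*x + 1)) = 0 := by
      linear_combination x*k₀ + (mu + lam)*x*(hu) - (x^2 - 1)*(hx)
    rcases mul_eq_zero.1 ((mul_eq_zero.1 this).resolve_left hl.ne') with h3 | h3
    · have hx1 : x = 1 := by nlinarith
      subst hx1
      exact absurd (by nlinarith) h
    · have hx1 : x = -1/2 := by linarith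
      subst hx1
      exact ⟨rfl, by linarith⟩
  have both : 0 < lam → y + z ≠ 0 → y - z ≠ 0 → mu = 0 ∧ x = -1 := by
    intro hl h1 h2
    have e1 := (mul_eq_zero.1 hs).resolve_right h1
    have e2 := (mul_eq_zero.1 ht).resolve_right h2
    have hxm : x * mu = 0 := by linarith
    have hxl : lam * (x + 1) = 0 := by linarith
    have hx : x = -1 := by
      linarith [(mul_eq_zero.1 hxl).resolve_left hl.ne']
    subst hx
    exact ⟨by linarith, rfl⟩
  -- The case `λ > 0`, assuming the exceptional diagonal solution for `λ = μ` does not occur.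
  have pos : 0 < lam → 0 ≤ mu → (y + z = 0 → y - z ≠ 0 → mu ≠ lam) →
      y = 0 ∧ z = 0 ∧ (x = 1 ∨ (lam = 0 ∧ x = -1)) := by
    intro hl hm hex
    by_cases h1 : y + z = 0 <;> by_cases h2 : y - z = 0
    · exact finish hl h1 h2
    · exact absurd (minus hl h1 h2).2 (hex h1 h2)
    · exact absurd h2 (plus hl hm h1)
    · obtain ⟨-, hx⟩ := both hl h1 h2
      subst hx
      have hy : y = 0 := by nlinarith [sq_nonneg y, sq_nonneg z]
      have hz : z = 0 := by nlinarith [sq_nonneg y, sq_nonneg z]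
      exact absurd (by rw [hy, hz, add_zero]) h1
  rcases hcond with ⟨hl, hm, hne⟩ | ⟨he, hl, hne⟩ | ⟨hl, hm, hd⟩ | ⟨hm, hl, -⟩
  · exact pos hl hm.le fun _ _ => hne.symm
  · refine pos hl (he ▸ hl.le) fun h1 h2 _ => hne ?_
    have hzy : z = -y := by linarith
    subst hzy
    have hy : y ≠ 0 := fun h => h2 (by rw [h]; simp)
    have e1 : b - d - a = 0 := by
      refine (mul_eq_zero.1 (?_ : (b - d - a) * y = 0)).resolve_right hy
      linarith
    have e2 : c - d - a = 0 := by
      refine (mul_eq_zero.1 (?_ : (c - d - a) * y = 0)).resolve_right hy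
      linarith
    have e3 : b - c = 0 := by linarith
    have e4 : b + c - 2*a - 2*d = 0 := by linarith
    rw [e3, e4]; norm_num
  · subst hl
    have hyz : y * z = 0 := (mul_eq_zero.1 (by linarith : mu * (y*z) = 0)).resolve_left hm.ne'
    have hy : y = 0 := by
      by_contra h
      have hz := (mul_eq_zero.1 hyz).resolve_left h
      subst hz
      exact (mul_ne_zero hd h) (by linarith)
    have hz : z = 0 := by
      by_contra h
      subst hy
      exact (mul_ne_zero hd h) (by linarith)
    subst hy hz
    refine ⟨rfl, rfl, ?_⟩
    rcases pm_one (by linarith : x^2 = 1) with h | h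
    · exact Or.inl h
    · exact Or.inr ⟨rfl, h⟩
  · exact pos hl hm.ge fun _ _ => by rw [hm]; exact hl.ne

/-- The block of `g` on `e₁^⊥`, with columns `(p,q)` and `(r,s)`, is `±1`, and `g e₁ = e₁`. The
hypotheses `k₁, k₂` and `s₁, s₂` are the coordinates of the invariance of `K(e₁,e₂)` and `S e₂`. -/
lemma block_eq {lam mu a b c d x p q r s : ℝ} (hcond : Nondeg lam mu a b c d)
    (hx : x = 1 ∨ (lam = 0 ∧ x = -1))
    (hu : p^2 + q^2 = 1) (ho : p*r + q*s = 0) (hdet : x*(p*s - q*r) = 1)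
    (k₁ : x*(-lam*p + mu*q) = -lam*p + mu*r) (k₂ : x*(mu*p - lam*q) = -lam*q + mu*s)
    (s₁ : b*p + d*q = b*p + d*r) (s₂ : d*p + c*q = b*q + d*s) :
    x = 1 ∧ q = 0 ∧ r = 0 ∧ ((p = 1 ∧ s = 1) ∨ (p = -1 ∧ s = -1)) := by
  have ends : x = 1 → q = 0 → x = 1 ∧ q = 0 ∧ r = 0 ∧ ((p = 1 ∧ s = 1) ∨ (p = -1 ∧ s = -1)) := by
    rintro rfl rfl
    rcases pm_one (by linarith : p^2 = 1) with rfl | rfl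
    · exact ⟨rfl, rfl, by linarith, Or.inl ⟨rfl, by linarith⟩⟩
    · exact ⟨rfl, rfl, by linarith, Or.inr ⟨rfl, by linarith⟩⟩
  have main : 0 < mu → x = 1 → q = 0 := by
    rintro hm rfl
    have hr : r = q := mul_left_cancel₀ hm.ne' (by linarith)
    have hs : s = p := mul_left_cancel₀ hm.ne' (by linarith)
    subst hr hs
    -- `p² - q² = 1 = p² + q²`
    exact pow_eq_zero_iff two_ne_zero |>.1 (by linarith : r^2 = 0)
  rcases hcond with ⟨hl, hm, hne⟩ | ⟨he, hl, hne⟩ | ⟨hl, hm, hd⟩ | ⟨hm, hl, hne⟩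
  · have h1 := hx.resolve_right fun h => hl.ne' h.1
    exact ends h1 (main hm h1)
  · have h1 := hx.resolve_right fun h => hl.ne' h.1
    exact ends h1 (main (he ▸ hl) h1)
  · rcases hx with h1 | ⟨-, rfl⟩
    · exact ends h1 (main hm h1)
    -- If `g e₁ = -e₁`, the block is `diag(p,-p)`, which does not commute with `S` as `d ≠ 0`.
    · exfalso
      subst hl
      have hr : r = -q := mul_left_cancel₀ hm.ne' (by linarith)
      have hs : s = -p := mul_left_cancel₀ hm.ne' (by linarith)
      subst hr hs
      have hq : q = 0 := pow_eq_zero_iff two_ne_zero |>.1 (by linarith : q^2 = 0)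
      subst hq
      have hp : p = 0 := mul_left_cancel₀ hd (by linarith)
      subst hp
      norm_num at hu
  · have h1 := hx.resolve_right fun h => hl.ne' h.1
    refine ends h1 ?_
    subst h1
    have hr : r = -q := by linear_combination (-r)*hu + p*ho - q*hdet
    have hs : s = p := by linear_combination (-s)*hu + q*ho + p*hdet
    subst hr hs
    by_contra hq
    have hd : d = 0 := (mul_eq_zero.1 (by linarith : d * q = 0)).resolve_right hq
    subst hd
    have hbc : b - c = 0 := (mul_eq_zero.1 (by linarith : (b - c) * q = 0)).resolve_right hq
    exact hne (by rw [hbc]; norm_num)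

lemma eq_sum_stdB (X : V₃) : X = X 0 • stdB 0 + X 1 • stdB 1 + X 2 • stdB 2 := by
  ext i; fin_cases i <;> simp [stdB]

lemma matrixOf_apply (g : V₃ ≃ₗᵢ[ℝ] V₃) (i j : Fin 3) : matrixOf stdB g i j = g (stdB j) i := by
  simp [matrixOf, stdB, EuclideanSpace.inner_single_left]

lemma det_eq (g : V₃ ≃ₗᵢ[ℝ] V₃) :
    LinearMap.det (g.toLinearEquiv : V₃ →ₗ[ℝ] V₃) = (matrixOf stdB g).det := by
  rw [← LinearMap.det_toMatrix stdB.toBasis]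
  congr 1
  ext i j
  rw [matrixOf_apply, LinearMap.toMatrix_apply]
  simp [stdB]

/-- Coordinates of `K(X,Y)` and `S X` for a pair in canonical form. -/
lemma coords {K : V₃ →ₗ[ℝ] V₃ →ₗ[ℝ] V₃} {S : V₃ →ₗ[ℝ] V₃} (hK : IsAdmissibleK K)
    {lam mu a b c d : ℝ} (hform : Z2Form K S stdB lam mu a b c d) (X Y : V₃) :
    K X Y = !₂[2*lam*(X 0*Y 0) - lam*(X 1*Y 1 + X 2*Y 2) + mu*(X 1*Y 2 + X 2*Y 1),
      -lam*(X 0*Y 1 + X 1*Y 0) + mu*(X 0*Y 2 + X 2*Y 0),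
      mu*(X 0*Y 1 + X 1*Y 0) - lam*(X 0*Y 2 + X 2*Y 0)] ∧
    S X = !₂[a*X 0, b*X 1 + d*X 2, d*X 1 + c*X 2] := by
  obtain ⟨h00, h01, h02, h11, h12, h22, s0, s1, s2⟩ := hform
  have h10 := (hK.1 (stdB 1) (stdB 0)).trans h01
  have h20 := (hK.1 (stdB 2) (stdB 0)).trans h02
  have h21 := (hK.1 (stdB 2) (stdB 1)).trans h12
  constructor
  · conv_lhs => rw [eq_sum_stdB X, eq_sum_stdB Y]
    simp only [map_add, map_smul, LinearMap.add_apply, LinearMap.smul_apply,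
      h00, h01, h02, h10, h11, h12, h20, h21, h22]
    ext i; fin_cases i <;> simp [stdB] <;> ring
  · conv_lhs => rw [eq_sum_stdB X]
    simp only [map_add, map_smul, s0, s1, s2]
    ext i; fin_cases i <;> simp [stdB] <;> ring

lemma inner_eq (X Y : V₃) : ⟪X, Y⟫ = X 0*Y 0 + X 1*Y 1 + X 2*Y 2 := by
  simp [PiLp.inner_apply, Fin.sum_univ_three]; ring

/-- if `(K,S)` is in `Z₂`-canonical form with parameters `(λ,μ,a,b,c,d)`
satisfying one of the four listed nondegeneracy conditions, then the stabilizer of `(K,S)`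
in `SO(3)` is exactly the order-2 subgroup `{id, P₁}`. -/
theorem statement_13 (K : V₃ →ₗ[ℝ] V₃ →ₗ[ℝ] V₃) (S : V₃ →ₗ[ℝ] V₃)
    (hK : IsAdmissibleK K) (hS : IsSymmEndo S)
    (lam mu a b c d : ℝ) (hform : Z2Form K S stdB lam mu a b c d)
    (hcond : (0 < lam ∧ 0 < mu ∧ lam ≠ mu) ∨
             (lam = mu ∧ 0 < lam ∧ (b - c)^2 + (b + c - 2*a - 2*d)^2 ≠ 0) ∨
             (lam = 0 ∧ 0 < mu ∧ d ≠ 0) ∨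
             (mu = 0 ∧ 0 < lam ∧ (b - c)^2 + d^2 ≠ 0)) :
    stab K S = {g | matrixOf stdB g ∈ z2MatSet} := by
  have hc : Nondeg lam mu a b c d := hcond
  ext g
  change _ ↔ matrixOf stdB g = 1 ∨ matrixOf stdB g = P1mat
  have hg : ∀ X : V₃, g X = X 0 • g (stdB 0) + X 1 • g (stdB 1) + X 2 • g (stdB 2) := by
    intro X
    conv_lhs => rw [eq_sum_stdB X]
    simp only [map_add, map_smul]
  constructor
  · rintro ⟨hdet, hgK, hgS⟩
    have hin : ∀ i j, ⟪g (stdB i), g (stdB j)⟫ = if i = j then (1 : ℝ) else 0 := by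
      intro i j
      rw [g.inner_map_map, orthonormal_iff_ite.1 stdB.orthonormal]
    have n0 := hin 0 0
    have o01 := hin 0 1
    have o02 := hin 0 2
    have n1 := hin 1 1
    have o12 := hin 1 2
    simp only [inner_eq] at n0 o01 o02 n1 o12
    obtain ⟨f00, f01, -, -, -, -, t0, t1, -⟩ := id hform
    have K00 := hgK (stdB 0) (stdB 0)
    have K01 := hgK (stdB 0) (stdB 1)
    have S0 := hgS (stdB 0)
    have S1 := hgS (stdB 1)
    rw [f00, (coords hK hform _ _).1] at K00
    rw [f01, (coords hK hform _ _).1] at K01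
    rw [t0, (coords hK hform _ 0).2] at S0
    rw [t1, (coords hK hform _ 0).2] at S1
    rw [det_eq, Matrix.det_fin_three] at hdet
    simp only [matrixOf_apply] at hdet
    simp only [map_add, map_smul] at K00 K01 S0 S1
    have A0 := congrArg (fun v : V₃ => v 0) K00
    have A1 := congrArg (fun v : V₃ => v 1) K00
    have A2 := congrArg (fun v : V₃ => v 2) K00
    have B1 := congrArg (fun v : V₃ => v 1) K01
    have B2 := congrArg (fun v : V₃ => v 2) K01
    have C1 := congrArg (fun v : V₃ => v 1) S0
    have C2 := congrArg (fun v : V₃ => v 2) S0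
    have D1 := congrArg (fun v : V₃ => v 1) S1
    have D2 := congrArg (fun v : V₃ => v 2) S1
    have hM : matrixOf stdB g = !![g (stdB 0) 0, g (stdB 1) 0, g (stdB 2) 0;
        g (stdB 0) 1, g (stdB 1) 1, g (stdB 2) 1; g (stdB 0) 2, g (stdB 1) 2, g (stdB 2) 2] := by
      ext i j; rw [matrixOf_apply]; fin_cases i <;> fin_cases j <;> rfl
    rw [hM]
    simp at A0 A1 A2 B1 B2 C1 C2 D1 D2 n0 o01 o02 n1 o12
    generalize g (stdB 0) = u at *
    generalize g (stdB 1) = v at *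
    generalize g (stdB 2) = w at *
    obtain ⟨hy, hz, hx⟩ := axis_eq hc (x := u 0) (y := u 1) (z := u 2) (by linarith) (by linarith)
      (by linarith) (by linarith) (by linarith) (by linarith)
    rw [hy, hz] at o01 o02 hdet B1 B2 ⊢
    have hx0 : u 0 ≠ 0 := by rcases hx with h | ⟨-, h⟩ <;> rw [h] <;> norm_num
    have v0 : v 0 = 0 := by simpa [hx0] using o01
    have w0 : w 0 = 0 := by simpa [hx0] using o02
    rw [v0] at n1 o12 hdet B1 B2 ⊢
    rw [w0] at hdet ⊢
    obtain ⟨hx1, hq, hr, h⟩ := block_eq hc hx (p := v 1) (q := v 2) (r := w 1) (s := w 2)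
      (by linarith) (by linarith) (by linarith) (by linarith) (by linarith)
      (by rcases D1 with h | h <;> simp [h]) (by linarith)
    rw [hx1, hq, hr]
    rcases h with ⟨hp, hs⟩ | ⟨hp, hs⟩ <;> rw [hp, hs]
    · left; ext i j; fin_cases i <;> fin_cases j <;> simp
    · right; rfl
  · intro h
    have hcol : ∃ ε : ℝ, ε * ε = 1 ∧ (matrixOf stdB g).det = 1 ∧
        ∀ X : V₃, g X = !₂[X 0, ε * X 1, ε * X 2] := by
      have key : ∀ ε : ℝ, ε * ε = 1 → matrixOf stdB g = !![1, 0, 0; 0, ε, 0; 0, 0, ε] →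
          ε * ε = 1 ∧ (matrixOf stdB g).det = 1 ∧ ∀ X : V₃, g X = !₂[X 0, ε * X 1, ε * X 2] := by
        intro ε hε hM
        refine ⟨hε, by simp [hM, Matrix.det_fin_three, hε], fun X => ?_⟩
        rw [hg X]
        ext i
        simp only [PiLp.add_apply, PiLp.smul_apply, ← matrixOf_apply, hM]
        fin_cases i <;> simp [mul_comm]
      rcases h with h | h
      · refine ⟨1, key 1 (by norm_num) (h.trans ?_)⟩
        ext i j; fin_cases i <;> fin_cases j <;> simp
      · exact ⟨-1, key (-1) (by norm_num) h⟩
    obtain ⟨ε, hε, hdet, hgX⟩ := hcol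
    refine ⟨(det_eq g).trans hdet, fun X Y => ?_, fun X => ?_⟩
    · rw [hgX (K X Y), (coords hK hform _ _).1, (coords hK hform X Y).1, hgX X, hgX Y]
      ext i
      fin_cases i <;> simp
      · linear_combination (-lam*(X 1*Y 1 + X 2*Y 2) + mu*(X 1*Y 2 + X 2*Y 1)) * hε
      · ring
      · ring
    · rw [hgX (S X), (coords hK hform _ 0).2, (coords hK hform X 0).2, hgX X]
      ext i
      fin_cases i <;> simp <;> ring
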